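/- arXiv:1102.1273 — 5 statements merged into one kernel-verified Lean document; each statement's English description precedes it below -/
import Mathlib

section
/- Let m ≥ 1 and let w_1 > w_2 > ... > w_m > 0 be real numbers, and let p_1,...,p_m be the Mix-R probabilities for these weights. Then p_i ≥ 0 for all i, p_1 + p_2 + ... + p_m = 1, p_i ≤ 1 - w_{i+1}/w_i for all i < m, and there exists n with 1 ≤ n ≤ m such that p_i = 1 - w_{i+1}/w_i for all i < n and p_i = 0 for all i > n. -/
/-!
The remainder `r i` stays nonnegative, since each step removes at most `r i`, and
`∑_{j < k} p j + r k = 1` throughout; this gives nonnegativity and total mass `1`.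
For the threshold `n`: as long as the minimum is its first argument the bound is attained.
At the first index `n` where it is the second one, `r (n + 1) = 0`; the remainder
is then zero from there on, so all later `p i` vanish. If this never happens, `n = m` works.
-/

/-- Given real weights `w 1 > w 2 > … > w m > 0`, the Mix-R probabilities
`p 1, …, p m` are defined by the recursion `r 1 = 1`,
`p i = min (1 - w (i+1) / w i) (r i)` and `r (i+1) = r i - p i` for
`1 ≤ i < m`, and `p m = r m`.  Then the `p i` are nonnegative, sum to `1`,
satisfy `p i ≤ 1 - w (i+1) / w i` for `i < m`, and there is `1 ≤ n ≤ m`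
such that the bound is attained with equality for `i < n` while `p i = 0`
for `i > n`. -/
theorem stmt1 (m : ℕ) (hm : 1 ≤ m) (w p r : ℕ → ℝ)
    (hwpos : ∀ i, 1 ≤ i → i ≤ m → 0 < w i)
    (hwdec : ∀ i, 1 ≤ i → i < m → w (i + 1) < w i)
    (hr1 : r 1 = 1)
    (hprec : ∀ i, 1 ≤ i → i < m → p i = min (1 - w (i + 1) / w i) (r i))
    (hrrec : ∀ i, 1 ≤ i → i < m → r (i + 1) = r i - p i)
    (hpm : p m = r m) :
    (∀ i, 1 ≤ i → i ≤ m → 0 ≤ p i) ∧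
    (∑ i ∈ Finset.Icc 1 m, p i) = 1 ∧
    (∀ i, 1 ≤ i → i < m → p i ≤ 1 - w (i + 1) / w i) ∧
    ∃ n, 1 ≤ n ∧ n ≤ m ∧
      (∀ i, 1 ≤ i → i < n → p i = 1 - w (i + 1) / w i) ∧
      (∀ i, n < i → i ≤ m → p i = 0) := by
  have hb : ∀ i, 1 ≤ i → i < m → 0 < 1 - w (i + 1) / w i := fun i h1 h2 =>
    sub_pos.2 ((div_lt_one (hwpos i h1 h2.le)).2 (hwdec i h1 h2))
  have hr : ∀ k, 1 ≤ k → k ≤ m → 0 ≤ r k := by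
    intro k hk
    induction k, hk using Nat.le_induction with
    | base => intro _; rw [hr1]; exact zero_le_one
    | succ k hk ih =>
      intro hkm
      rw [hrrec k hk hkm, hprec k hk hkm]
      exact sub_nonneg.2 (min_le_right _ _)
  have hsum : ∀ k, 1 ≤ k → k ≤ m → ∑ i ∈ Finset.Ico 1 k, p i + r k = 1 := by
    intro k hk
    induction k, hk using Nat.le_induction with
    | base => intro _; simp [hr1]
    | succ k hk ih =>
      intro hkm
      rw [Finset.sum_Ico_succ_top hk, hrrec k hk hkm]
      linarith [ih (by omega)]
  -- Before index `k`, either the bound was always attained, or the mass ran out at some `n < k`.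
  have hinv : ∀ k, 1 ≤ k → k ≤ m →
      (∀ i, 1 ≤ i → i < k → p i = 1 - w (i + 1) / w i) ∨
      ∃ n, 1 ≤ n ∧ n < k ∧ (∀ i, 1 ≤ i → i < n → p i = 1 - w (i + 1) / w i) ∧
        (∀ i, n < i → i < k → p i = 0) ∧ r k = 0 := by
    intro k hk
    induction k, hk using Nat.le_induction with
    | base => intro _; left; intro i h1 h2; omega
    | succ k hk ih =>
      intro hkm
      have hp := hprec k hk hkm
      have hrk := hrrec k hk hkm
      rcases ih (by omega) with h | ⟨n, hn1, hnk, heq, hz, hr0⟩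
      · rcases le_total (1 - w (k + 1) / w k) (r k) with hle | hle
        · left
          intro i h1 h2
          rcases Nat.lt_succ_iff_lt_or_eq.1 h2 with h3 | rfl
          · exact h i h1 h3
          · rw [hp, min_eq_left hle]
        · right
          rw [min_eq_right hle] at hp
          exact ⟨k, hk, k.lt_succ_self, h, fun i h1 h2 => by omega, by rw [hrk, hp, sub_self]⟩
      · right
        rw [hr0, min_eq_right (hb k hk hkm).le] at hp
        refine ⟨n, hn1, by omega, heq, fun i h1 h2 => ?_, by rw [hrk, hp, hr0, sub_self]⟩
        rcases Nat.lt_succ_iff_lt_or_eq.1 h2 with h3 | rfl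
        · exact hz i h1 h3
        · exact hp
  refine ⟨fun i h1 h2 => ?_, ?_, fun i h1 h2 => ?_, ?_⟩
  · rcases h2.lt_or_eq with h | rfl
    · rw [hprec i h1 h]
      exact le_min (hb i h1 h).le (hr i h1 h2)
    · rw [hpm]
      exact hr i h1 h2
  · have h := hsum m hm le_rfl
    rwa [← hpm, ← Finset.sum_Ico_succ_top hm, Finset.Ico_add_one_right_eq_Icc] at h
  · rw [hprec i h1 h2]
    exact min_le_left _ _
  · rcases hinv m hm le_rfl with h | ⟨n, hn1, hnm, heq, hz, hr0⟩
    · exact ⟨m, hm, le_rfl, h, fun i h1 h2 => by omega⟩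
    · refine ⟨n, hn1, hnm.le, heq, fun i h1 h2 => ?_⟩
      rcases h2.lt_or_eq with h | rfl
      · exact hz i h1 h
      · rw [hpm, hr0]
end

section
/- Let n ≥ 1 and let w_1 > w_2 > ... > w_n > 0 be real numbers. Suppose p_i = 1 - w_{i+1}/w_i for every i = 1,...,n-1, that Σ_{i=1}^{n-1} p_i ≤ 1, and set p_n = 1 - Σ_{i=1}^{n-1} p_i. Then the expected gain satisfies Σ_{i=1}^{n} p_i w_i ≥ w_1 · (1 - (1 - 1/n)^n). -/
/-!
Since `p i * w i = w i - w (i+1)` for `i < n`, the expected gain telescopes to `w 1 - w n * S` with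
`S = ∑_{i<n} p i`, and `w n = w 1 * ∏_{i<n} (1 - p i)`. The claim therefore reduces to
`S * ∏_{i<n} (1 - p i) ≤ (1 - 1/n)^n`, which is AM-GM for these `n` nonnegative factors: their
sum is `S + (n - 1) - S = n - 1`.
-/

/-- Unweighted AM-GM over a finite set, with the geometric mean's root cleared. -/
lemma prod_le_mean_pow {ι : Type*} (s : Finset ι) (hs : s.Nonempty) (z : ι → ℝ)
    (hz : ∀ i ∈ s, 0 ≤ z i) :
    ∏ i ∈ s, z i ≤ ((∑ i ∈ s, z i) / (s.card : ℝ)) ^ s.card := by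
  have hc : (0 : ℝ) < s.card := by exact_mod_cast hs.card_pos
  have h := Real.geom_mean_le_arith_mean_weighted s (fun _ => 1 / (s.card : ℝ)) z
    (fun _ _ => by positivity) (by simp [hc.ne']) hz
  rw [← Finset.mul_sum, one_div_mul_eq_div] at h
  refine le_trans (le_of_eq ?_) (pow_le_pow_left₀
    (Finset.prod_nonneg fun i hi => Real.rpow_nonneg (hz i hi) _) h s.card)
  rw [← Finset.prod_pow]
  refine Finset.prod_congr rfl fun i hi => ?_
  rw [one_div, Real.rpow_inv_natCast_pow (hz i hi) hs.card_pos.ne']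

/-- If `w 1 > … > w n > 0`, `p i = 1 - w (i+1) / w i` for `1 ≤ i < n`,
`∑_{i=1}^{n-1} p i ≤ 1`, and `p n = 1 - ∑_{i=1}^{n-1} p i`, then the
expected gain satisfies
`∑_{i=1}^{n} p i * w i ≥ w 1 * (1 - (1 - 1/n)^n)`. -/
theorem stmt6 (n : ℕ) (hn : 1 ≤ n) (w p : ℕ → ℝ)
    (hwpos : ∀ i, 1 ≤ i → i ≤ n → 0 < w i)
    (hwdec : ∀ i, 1 ≤ i → i < n → w (i + 1) < w i)
    (hp : ∀ i, 1 ≤ i → i < n → p i = 1 - w (i + 1) / w i)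
    (hsum : ∑ i ∈ Finset.Ico 1 n, p i ≤ 1)
    (hpn : p n = 1 - ∑ i ∈ Finset.Ico 1 n, p i) :
    ∑ i ∈ Finset.Icc 1 n, p i * w i ≥ w 1 * (1 - (1 - 1 / (n : ℝ)) ^ n) := by
  have htel : ∀ k, 1 ≤ k → k ≤ n → w k = w 1 * ∏ i ∈ Finset.Ico 1 k, (1 - p i) ∧
      ∑ i ∈ Finset.Ico 1 k, p i * w i = w 1 - w k := by
    intro k hk
    induction k, hk using Nat.le_induction with
    | base => intro _; simp
    | succ k hk ih =>
      intro hkn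
      obtain ⟨h1, h2⟩ := ih (by omega)
      have hw := (hwpos k hk (by omega)).ne'
      have hpk := hp k hk (by omega)
      rw [Finset.prod_Ico_succ_top hk, Finset.sum_Ico_succ_top hk, h2, ← mul_assoc, ← h1, hpk]
      constructor <;> field_simp <;> ring
  obtain ⟨hprod, hgain⟩ := htel n hn le_rfl
  have hp0 : ∀ i ∈ Finset.Ico 1 n, 0 ≤ p i ∧ 0 ≤ 1 - p i := by
    intro i hi
    obtain ⟨h1, h2⟩ := Finset.mem_Ico.1 hi
    have hw := hwpos i h1 h2.le
    have hw' := hwpos (i + 1) (by omega) h2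
    rw [hp i h1 h2]
    have h3 : w (i + 1) / w i ≤ 1 := (div_le_one hw).2 (hwdec i h1 h2).le
    have h4 : 0 < w (i + 1) / w i := div_pos hw' hw
    constructor <;> linarith
  set S := ∑ i ∈ Finset.Ico 1 n, p i with hS
  have hS0 : 0 ≤ S := Finset.sum_nonneg fun i hi => (hp0 i hi).1
  -- The unused index `n` carries the extra factor `S`.
  have hamgm := prod_le_mean_pow (Finset.Ico 1 (n + 1)) ⟨1, by simp; omega⟩
    (fun i => if i = n then S else 1 - p i) (by
      intro i hi
      split_ifs with h
      · exact hS0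
      · exact (hp0 i (by simp at hi ⊢; omega)).2)
  have hne : ∀ i ∈ Finset.Ico 1 n, (if i = n then S else 1 - p i) = 1 - p i := by
    intro i hi
    exact if_neg (Finset.mem_Ico.1 hi).2.ne
  rw [Finset.prod_Ico_succ_top hn, Finset.sum_Ico_succ_top hn, Finset.prod_congr rfl hne,
    Finset.sum_congr rfl hne, if_pos rfl, Finset.sum_sub_distrib, ← hS] at hamgm
  have hn0 : (n : ℝ) ≠ 0 := by positivity
  have hmean : (∑ _i ∈ Finset.Ico 1 n, (1 : ℝ) - S + S) / ((Finset.Ico 1 (n + 1)).card : ℝ)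
      = 1 - 1 / (n : ℝ) := by
    simp [Nat.cast_sub hn]
    field_simp
  rw [hmean, Nat.card_Ico, Nat.add_sub_cancel] at hamgm
  have hIcc : ∑ i ∈ Finset.Icc 1 n, p i * w i = w 1 - w n * S := by
    have : Finset.Icc 1 n = Finset.Ico 1 (n + 1) := by ext; simp
    rw [this, Finset.sum_Ico_succ_top hn, hgain, hpn]
    ring
  rw [hIcc, hprod]
  have := mul_le_mul_of_nonneg_left hamgm (hwpos 1 le_rfl hn).le
  linarith
end

section
/- Let m ≥ 1, let w_1 > w_2 > ... > w_m > 0 be real numbers, let p_1,...,p_m be the Mix-R probabilities for these weights, and let n be the largest index with p_n > 0. Then for every z with 1 ≤ z ≤ m, the adversary's expected amortized single-step gain is bounded by the algorithm's expected single-step gain as follows: w_z + Σ_{i=1}^{z-1} p_i w_i ≤ w_1 ≤ (1 - (1 - 1/n)^n)^{-1} · Σ_{i=1}^{m} p_i w_i. (This is the single-step core of the theorem that Mix-R is 1/(1-(1-1/N)^N)-competitive against an adaptive adversary, where N bounds the number of packets assigned positive probability in any step.) -/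
/-!
Mix-R guarantees `p i * w i ≤ w i - w (i + 1)`, so the adversary's amortized gain telescopes to at
most `w 1`.

For the second inequality, the residual `r i` stays nonnegative and is nonincreasing. Since
`0 < p n ≤ r n`, the minimum defining `p i` is attained by `1 - w (i + 1) / w i` for every `i < n`,
whereas `p n = r n` because otherwise `p (n + 1)` would be positive. Hence `∑ i ≤ n, p i = 1`, and
telescoping gives both
`∑ i ≤ n, p i * w i = w 1 - (1 - p n) * w n` and `(1 - p n) * w n = w 1 * ∏ i ≤ n, (1 - p i)`.
By AM-GM the last product is at most `(1 - 1 / n) ^ n`.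
-/

/-- AM-GM for the complements of a probability vector. -/
lemma prod_one_sub_le_of_sum_eq_one (n : ℕ) (hn : 1 ≤ n) (p : ℕ → ℝ)
    (hp : ∀ i ∈ Finset.Icc 1 n, p i ≤ 1) (hsum : ∑ i ∈ Finset.Icc 1 n, p i = 1) :
    ∏ i ∈ Finset.Icc 1 n, (1 - p i) ≤ (1 - 1 / (n : ℝ)) ^ n := by
  have hn0 : (0 : ℝ) < n := by exact_mod_cast hn
  have hnn : ∀ i ∈ Finset.Icc 1 n, 0 ≤ 1 - p i := fun i hi => by linarith [hp i hi]
  have hP : 0 ≤ ∏ i ∈ Finset.Icc 1 n, (1 - p i) := Finset.prod_nonneg hnn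
  have h := Real.geom_mean_le_arith_mean (Finset.Icc 1 n) (fun _ => 1) (fun i => 1 - p i)
    (fun _ _ => zero_le_one) (by simpa using Nat.pos_of_ne_zero (by omega)) hnn
  simp only [Real.rpow_one, one_mul, Finset.sum_sub_distrib, hsum, Finset.sum_const,
    Nat.card_Icc, Nat.add_sub_cancel, nsmul_eq_mul, mul_one] at h
  calc ∏ i ∈ Finset.Icc 1 n, (1 - p i)
      = ((∏ i ∈ Finset.Icc 1 n, (1 - p i)) ^ ((n : ℝ)⁻¹)) ^ n :=
        (Real.rpow_inv_natCast_pow hP (by omega)).symm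
    _ ≤ (((n : ℝ) - 1) / n) ^ n := pow_le_pow_left₀ (Real.rpow_nonneg hP _) h n
    _ = (1 - 1 / (n : ℝ)) ^ n := by rw [sub_div, div_self hn0.ne']


/-- Single-step core of the competitiveness of Mix-R.  Let
`w 1 > … > w m > 0` be the weights of the pending packets, let
`p 1, …, p m` be the Mix-R probabilities (defined via the recursion
`r 1 = 1`, `p i = min (1 - w (i+1) / w i) (r i)`,
`r (i+1) = r i - p i` for `1 ≤ i < m`, and `p m = r m`), and let `n` be the
largest index with `p n > 0`.  Then for every `1 ≤ z ≤ m` the adversary's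
expected amortized single-step gain is bounded by the algorithm's expected
single-step gain:
`w z + ∑_{i<z} p i * w i ≤ w 1 ≤ (1 - (1 - 1/n)^n)⁻¹ * ∑_{i=1}^m p i * w i`. -/
theorem stmt7 (m : ℕ) (hm : 1 ≤ m) (w p r : ℕ → ℝ)
    (hwpos : ∀ i, 1 ≤ i → i ≤ m → 0 < w i)
    (hwdec : ∀ i, 1 ≤ i → i < m → w (i + 1) < w i)
    (hr1 : r 1 = 1)
    (hprec : ∀ i, 1 ≤ i → i < m → p i = min (1 - w (i + 1) / w i) (r i))
    (hrrec : ∀ i, 1 ≤ i → i < m → r (i + 1) = r i - p i)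
    (hpm : p m = r m)
    (n : ℕ) (hn1 : 1 ≤ n) (hnm : n ≤ m) (hpn : 0 < p n)
    (hnmax : ∀ i, 1 ≤ i → i ≤ m → 0 < p i → i ≤ n)
    (z : ℕ) (hz1 : 1 ≤ z) (hzm : z ≤ m) :
    w z + ∑ i ∈ Finset.Ico 1 z, p i * w i ≤ w 1 ∧
    w 1 ≤ (1 - (1 - 1 / (n : ℝ)) ^ n)⁻¹ * ∑ i ∈ Finset.Icc 1 m, p i * w i := by
  have hfrac : ∀ i, 1 ≤ i → i < m → 0 < 1 - w (i + 1) / w i := fun i h1 h2 => by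
    have := (div_lt_one (hwpos i h1 h2.le)).2 (hwdec i h1 h2)
    linarith
  have hpr : ∀ i, 1 ≤ i → i ≤ m → p i ≤ r i := fun i h1 h2 => by
    rcases h2.lt_or_eq with h | rfl
    · rw [hprec i h1 h]; exact min_le_right _ _
    · exact hpm.le
  have hr0 : ∀ i, 1 ≤ i → i ≤ m → 0 ≤ r i := fun i h1 => by
    induction i, h1 using Nat.le_induction with
    | base => intro _; rw [hr1]; exact zero_le_one
    | succ k hk _ =>
      intro h
      rw [hrrec k hk h]
      linarith [hpr k hk (by omega)]
  have hp0 : ∀ i, 1 ≤ i → i ≤ m → 0 ≤ p i := fun i h1 h2 => by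
    rcases h2.lt_or_eq with h | rfl
    · rw [hprec i h1 h]; exact le_min (hfrac i h1 h).le (hr0 i h1 h2)
    · rw [hpm]; exact hr0 i h1 h2
  have hranti : ∀ i, 1 ≤ i → ∀ j, i ≤ j → j ≤ m → r j ≤ r i := fun i h1 j hij => by
    induction j, hij using Nat.le_induction with
    | base => intro _; exact le_rfl
    | succ k hk ih =>
      intro h
      rw [hrrec k (h1.trans hk) h]
      linarith [ih (by omega), hp0 k (h1.trans hk) (by omega)]
  refine ⟨?_, ?_⟩
  · clear hpn hnmax
    induction z, hz1 using Nat.le_induction with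
    | base => simp
    | succ k hk ih =>
      have hw := hwpos k hk (by omega)
      have h1 : p k ≤ 1 - w (k + 1) / w k := by
        rw [hprec k hk hzm]; exact min_le_left _ _
      have h2 : p k * w k ≤ w k - w (k + 1) :=
        (mul_le_mul_of_nonneg_right h1 hw.le).trans_eq (by field_simp)
      rw [Finset.sum_Ico_succ_top hk]
      linarith [ih (by omega)]
  · have hrn : 0 < r n := hpn.trans_le (hpr n hn1 hnm)
    have hplt : ∀ i, 1 ≤ i → i < n → p i = 1 - w (i + 1) / w i := fun i h1 h2 => by
      have hlt : p i < r i := by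
        have := hranti (i + 1) (by omega) n h2 hnm
        rw [hrrec i h1 (by omega)] at this
        linarith
      rw [hprec i h1 (by omega)] at hlt ⊢
      exact min_eq_left ((min_lt_iff.1 hlt).resolve_right (lt_irrefl _)).le
    have hpw : ∀ i, 1 ≤ i → i < n → (1 - p i) * w i = w (i + 1) := fun i h1 h2 => by
      have hw := hwpos i h1 (by omega)
      rw [hplt i h1 h2]
      field_simp
      ring
    have hpnr : p n = r n := by
      rcases hnm.lt_or_eq with h | rfl
      · refine le_antisymm (hpr n hn1 hnm) ?_
        by_contra! hlt
        have hr' : 0 < r (n + 1) := by rw [hrrec n hn1 h]; linarith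
        have hp' : 0 < p (n + 1) := by
          rcases (Nat.succ_le_of_lt h).lt_or_eq with h' | h'
          · rw [hprec (n + 1) (by omega) h']
            exact lt_min (hfrac (n + 1) (by omega) h') hr'
          · rw [Nat.succ_eq_add_one] at h'
            rw [h', hpm, ← h']; exact hr'
        have := hnmax (n + 1) (by omega) h hp'
        omega
      · exact hpm
    have hpartial : ∀ k, 1 ≤ k → k ≤ n →
        ∑ i ∈ Finset.Ico 1 k, p i = 1 - r k ∧
        ∑ i ∈ Finset.Ico 1 k, p i * w i = w 1 - w k ∧
        w 1 * ∏ i ∈ Finset.Ico 1 k, (1 - p i) = w k := fun k hk => by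
      induction k, hk using Nat.le_induction with
      | base => intro _; simp [hr1]
      | succ k hk ih =>
        intro h
        obtain ⟨h1, h2, h3⟩ := ih (by omega)
        have h4 := hpw k hk h
        rw [Finset.sum_Ico_succ_top hk, Finset.sum_Ico_succ_top hk, Finset.prod_Ico_succ_top hk,
          h1, h2, ← mul_assoc, h3, hrrec k hk (by omega)]
        refine ⟨by ring, by linarith, by linarith⟩
    obtain ⟨h1, h2, h3⟩ := hpartial n hn1 le_rfl
    have hIcc : Finset.Icc 1 n = Finset.Ico 1 (n + 1) := by ext i; simp
    have hsum : ∑ i ∈ Finset.Icc 1 n, p i = 1 := by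
      rw [hIcc, Finset.sum_Ico_succ_top hn1, h1, hpnr]; ring
    have hamgm := prod_one_sub_le_of_sum_eq_one n hn1 p (fun i hi => by
      rw [← hsum]
      refine Finset.single_le_sum (f := p) (fun j hj => ?_) hi
      rw [Finset.mem_Icc] at hj
      exact hp0 j hj.1 (hj.2.trans hnm)) hsum
    have hgain : ∑ i ∈ Finset.Icc 1 n, p i * w i =
        w 1 - w 1 * ∏ i ∈ Finset.Icc 1 n, (1 - p i) := by
      rw [hIcc, Finset.sum_Ico_succ_top hn1, Finset.prod_Ico_succ_top hn1, h2, ← mul_assoc, h3]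
      ring
    have hmono : ∑ i ∈ Finset.Icc 1 n, p i * w i ≤ ∑ i ∈ Finset.Icc 1 m, p i * w i := by
      refine Finset.sum_le_sum_of_subset_of_nonneg (Finset.Icc_subset_Icc_right hnm) ?_
      intro i hi _
      rw [Finset.mem_Icc] at hi
      exact mul_nonneg (hp0 i hi.1 hi.2) (hwpos i hi.1 hi.2).le
    have hc : 0 < 1 - (1 - 1 / (n : ℝ)) ^ n := by
      have hn' : (1 : ℝ) ≤ n := by exact_mod_cast hn1
      have ha : 1 / (n : ℝ) ≤ 1 := (div_le_one (by linarith)).2 hn'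
      have hb : 0 < 1 / (n : ℝ) := by positivity
      have := pow_lt_one₀ (show 0 ≤ 1 - 1 / (n : ℝ) by linarith) (by linarith)
        (show n ≠ 0 by omega)
      linarith
    rw [← div_eq_inv_mul, le_div_iff₀ hc]
    linarith [mul_le_mul_of_nonneg_left hamgm (hwpos 1 le_rfl hm).le]
end

section
/- Let n ≥ 1 be a natural number, let a > 1 be a real number, and define u_k = a^{n-k}·(a-1) for 0 ≤ k ≤ n-1 and u_n = a - n·(a-1). Then for every function q : {0,1,...,n} → ℝ with Σ_{j=0}^{n} q_j = 1, the following identity holds: Σ_{k=0}^{n} u_k a^k + Σ_{j=0}^{n} q_j a^j · (Σ_{k=0}^{j-1} u_k) = a^{n+1} · Σ_{j=0}^{n} q_j a^j. -/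
/-!
The first sum equals `a ^ (n + 1)`: each of the `n` terms with `k < n` is `a ^ n * (a - 1)`, and
the last term `a ^ n * (a - n * (a - 1))` cancels them up to `a ^ (n + 1)`. The prefix sums of `u`
telescope, so that `a ^ j * ∑_{k < j} u k = a ^ (n + 1) * a ^ j - a ^ (n + 1)` for `j ≤ n`.
Averaging the latter against `q`, whose total mass is `1`, leaves `-a ^ (n + 1)`, which the first
sum cancels.
-/

/-- For `n ≥ 1`, `a > 1`, with `u k = a^(n-k) * (a-1)` for `0 ≤ k ≤ n-1` and
`u n = a - n * (a-1)`, and any `q : ℕ → ℝ` with `∑_{j=0}^{n} q j = 1`: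
`∑_{k=0}^{n} u k * a^k + ∑_{j=0}^{n} q j * a^j * (∑_{k=0}^{j-1} u k)
  = a^(n+1) * ∑_{j=0}^{n} q j * a^j`. -/
theorem stmt8 (n : ℕ) (hn : 1 ≤ n) (a : ℝ) (ha : 1 < a) (u q : ℕ → ℝ)
    (hu : ∀ k, k < n → u k = a ^ (n - k) * (a - 1))
    (hun : u n = a - n * (a - 1))
    (hq : ∑ j ∈ Finset.range (n + 1), q j = 1) :
    (∑ k ∈ Finset.range (n + 1), u k * a ^ k)
      + ∑ j ∈ Finset.range (n + 1), q j * a ^ j * (∑ k ∈ Finset.range j, u k)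
      = a ^ (n + 1) * ∑ j ∈ Finset.range (n + 1), q j * a ^ j := by
  have first : ∑ k ∈ Finset.range (n + 1), u k * a ^ k = a ^ (n + 1) := by
    have term : ∀ k ∈ Finset.range n, u k * a ^ k = a ^ n * (a - 1) := by
      intro k hk
      have hk := Finset.mem_range.mp hk
      rw [hu k hk, mul_right_comm, ← pow_add, Nat.sub_add_cancel hk.le]
    rw [Finset.sum_range_succ, Finset.sum_congr rfl term, hun, Finset.sum_const,
      Finset.card_range, nsmul_eq_mul]
    ring
  have pref : ∀ j, j ≤ n →
      a ^ j * ∑ k ∈ Finset.range j, u k = a ^ (n + 1) * a ^ j - a ^ (n + 1) := by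
    intro j
    induction j with
    | zero => simp
    | succ j ih =>
      intro hj
      have hpow : a ^ (n - j) * a ^ j = a ^ n := by
        rw [← pow_add, Nat.sub_add_cancel (by omega)]
      rw [Finset.sum_range_succ, hu j hj]
      linear_combination a * ih (by omega) + a * (a - 1) * hpow
  have second : ∑ j ∈ Finset.range (n + 1), q j * a ^ j * (∑ k ∈ Finset.range j, u k)
      = ∑ j ∈ Finset.range (n + 1), (a ^ (n + 1) * (q j * a ^ j) - a ^ (n + 1) * q j) := by
    refine Finset.sum_congr rfl fun j hj => ?_
    linear_combination q j * pref j (Nat.lt_succ_iff.mp (Finset.mem_range.mp hj))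
  rw [first, second, Finset.sum_sub_distrib, ← Finset.mul_sum, ← Finset.mul_sum, hq]
  ring
end

section
/- Let n ≥ 1 be a natural number and set a = 1 + 1/n. Then for every function q : {0,1,...,n} → ℝ with q_j ≥ 0 for all j and Σ_{j=0}^{n} q_j = 1, we have max_{0 ≤ k ≤ n} ( a^k + Σ_{j=k+1}^{n} q_j a^j ) ≥ (a^{n+1} / (a^{n+1} - 1)) · Σ_{j=0}^{n} q_j a^j. (Note a^{n+1} - n(a-1) = a^{n+1} - 1 for this choice of a.) -/
/-!
The maximum over `k` is at least any weighted average. Averaging with the weights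
`u k = (a - 1) / a ^ (k + 1)`, whose partial sums telescope to `∑_{k<j} u k = 1 - 1 / a ^ j`, gives,
with `S = ∑_j q j * a ^ j` and after exchanging the order of summation,
`∑_k u k * (a ^ k + ∑_{j>k} q j * a ^ j) = (n + 1) * (a - 1) / a + ∑_j q j * (a ^ j - 1) = S`,
because `(n + 1) * (a - 1) = a` and `∑_j q j = 1`. The total weight is
`1 - 1 / a ^ (n + 1)`, which is the reciprocal of the claimed ratio.
-/

lemma sum_weights (a : ℝ) (ha : a ≠ 0) (m : ℕ) :
    ∑ k ∈ Finset.range m, (a - 1) / a ^ (k + 1) = 1 - 1 / a ^ m := by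
  induction m with
  | zero => simp
  | succ m ih =>
    rw [Finset.sum_range_succ, ih]
    field_simp
    ring

/-- The weighted sum of the adversary's gains equals the algorithm's expected gain. -/
lemma sum_weighted_gain (n : ℕ) (hn : 1 ≤ n) (a : ℝ) (ha : a = 1 + 1 / (n : ℝ))
    (q : ℕ → ℝ) (hq1 : ∑ j ∈ Finset.range (n + 1), q j = 1) :
    ∑ k ∈ Finset.range (n + 1),
        (a - 1) / a ^ (k + 1) * (a ^ k + ∑ j ∈ Finset.Icc (k + 1) n, q j * a ^ j)
      = ∑ j ∈ Finset.range (n + 1), q j * a ^ j := by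
  have hn0 : (0 : ℝ) < n := by exact_mod_cast hn
  have ha0 : a ≠ 0 := by rw [ha]; positivity
  have hdiag : ∑ k ∈ Finset.range (n + 1), (a - 1) / a ^ (k + 1) * a ^ k = 1 := by
    have hterm : ∀ k ∈ Finset.range (n + 1), (a - 1) / a ^ (k + 1) * a ^ k = (a - 1) / a := by
      intro k _
      field_simp
      ring
    rw [Finset.sum_congr rfl hterm, Finset.sum_const, Finset.card_range, nsmul_eq_mul, ha]
    push_cast
    field_simp
    ring
  have hswap : ∑ k ∈ Finset.range (n + 1), ∑ j ∈ Finset.Icc (k + 1) n,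
        (a - 1) / a ^ (k + 1) * (q j * a ^ j)
      = ∑ j ∈ Finset.range (n + 1), ∑ k ∈ Finset.range j,
        (a - 1) / a ^ (k + 1) * (q j * a ^ j) := by
    apply Finset.sum_comm'
    intro k j
    simp only [Finset.mem_range, Finset.mem_Icc]
    omega
  have hinner : ∀ j ∈ Finset.range (n + 1), ∑ k ∈ Finset.range j,
      (a - 1) / a ^ (k + 1) * (q j * a ^ j) = q j * a ^ j - q j := by
    intro j _
    rw [← Finset.sum_mul, sum_weights a ha0]
    field_simp
  simp only [mul_add, Finset.sum_add_distrib, Finset.mul_sum]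
  rw [hdiag, hswap, Finset.sum_congr rfl hinner, Finset.sum_sub_distrib, hq1]
  ring

/-- Lower bound for the Collecting Items problem: for `n ≥ 1`,
`a = 1 + 1/n`, and any probability distribution `q 0, …, q n`, the maximum
over `0 ≤ k ≤ n` of the adversary's expected amortized single-step gain
`a^k + ∑_{j=k+1}^{n} q j * a^j` is at least
`(a^(n+1) / (a^(n+1) - 1)) * ∑_{j=0}^{n} q j * a^j`. -/
theorem stmt10 (n : ℕ) (hn : 1 ≤ n) (a : ℝ) (ha : a = 1 + 1 / (n : ℝ))
    (q : ℕ → ℝ) (hq0 : ∀ j, j ≤ n → 0 ≤ q j)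
    (hq1 : ∑ j ∈ Finset.range (n + 1), q j = 1) :
    ∃ k, k ≤ n ∧
      (a ^ (n + 1) / (a ^ (n + 1) - 1)) * ∑ j ∈ Finset.range (n + 1), q j * a ^ j
        ≤ a ^ k + ∑ j ∈ Finset.Icc (k + 1) n, q j * a ^ j := by
  have hn0 : (0 : ℝ) < n := by exact_mod_cast hn
  have ha1 : 1 < a := by
    rw [ha]
    have : 0 < 1 / (n : ℝ) := by positivity
    linarith
  have ha0 : 0 < a := by linarith
  have hpow : a ^ (n + 1) - 1 ≠ 0 := (sub_pos.2 (one_lt_pow₀ ha1 n.succ_ne_zero)).ne'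
  have hgain := sum_weighted_gain n hn a ha q hq1
  set S := ∑ j ∈ Finset.range (n + 1), q j * a ^ j
  have hconst : ∑ k ∈ Finset.range (n + 1),
      (a - 1) / a ^ (k + 1) * (a ^ (n + 1) / (a ^ (n + 1) - 1) * S) = S := by
    rw [← Finset.sum_mul, sum_weights a ha0.ne']
    field_simp
  obtain ⟨k, hk, hle⟩ := Finset.exists_le_of_sum_le ⟨0, by simp⟩ (hconst.trans hgain.symm).le
  have hw : 0 < (a - 1) / a ^ (k + 1) := div_pos (by linarith) (by positivity)
  exact ⟨k, Nat.lt_succ_iff.1 (Finset.mem_range.1 hk), le_of_mul_le_mul_left hle hw⟩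
end
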